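/- arXiv:1304.0431 — 2 statements merged into one kernel-verified Lean document; each statement's English description precedes it below -/
import Mathlib

section
/- Let f : I ⊆ (0,∞) → (0,∞) be differentiable on I°, a, b ∈ I° with a < b, f' integrable on [a,b], and let |f'|^q be s-geometrically convex on [a,b] for some q > 1 and s ∈ (0,1]. If |f'(a)| ≥ 1 and |f'(b)| ≥ 1, then |f(√(ab))² − (1/(ln b − ln a)) ∫_a^b (f(x)/x)·f(ab/x) dx| ≤ (ln(b/a)/2)·((q−1)/(2q−1))^{1−1/q}·[ b·|f'(b)|·|f'(a)|^{1−s}·M₁·h₃(θ)^{1/q} + a·|f'(a)|·|f'(b)|^{1−s}·M₂·h₃(ϑ)^{1/q} ]. -/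
/-!
Write `x(u) = a^(1-u/2) b^(u/2)` and `y(u) = a^(u/2) b^(1-u/2)`, so that `x(u) y(u) = ab` and
`x(1) = y(1) = √(ab)`, and put `φ(u) = f(x(u)) f(y(u))`. The substitution `x = x(u)` and the
symmetry `φ(2-u) = φ(u)` turn the normalised integral in the theorem into `∫₀¹ φ`, so the left-hand
side is `|φ(1) - ∫₀¹ φ|`, which is at most `∫₀¹ k` as soon as `|u φ'(u)| ≤ k(u)` with `k`
continuous (`abs_sub_integral_le`).

Here `φ' = (ln(b/a)/2) (x f'(x) f(y) - y f'(y) f(x))`, where `f(x) ≤ M₁` and `f(y) ≤ M₂` for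
`0 ≤ u ≤ 1`. The factors `y |f'(y)|` and `x |f'(x)|` are controlled by `s`-geometric convexity:
since `|f'(a)|, |f'(b)| ≥ 1` and `t^s ≤ s t + 1 - s`, they are at most
`b |f'(b)| |f'(a)|^(1-s) θ^(u/q)` and `a |f'(a)| |f'(b)|^(1-s) ϑ^(u/q)` (`geomPt_mul_le`). It remains
to bound `∫₀¹ u c^(u/q) du` by Hölder's inequality (`integral_mul_rpow_le`), using
`∫₀¹ u^(q/(q-1)) du = (q-1)/(2q-1)` and `∫₀¹ c^u du = h₃(c)`.
-/

open Real MeasureTheory Set intervalIntegral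

noncomputable def h₃ (u : ℝ) : ℝ :=
  if u = 1 then 1 else (u - 1) / Real.log u

/-! ### Geometric parametrisation of the interval -/

/-- The point `a^(u/2) * b^(1-u/2)` at parameter `u/2` on the geometric segment joining `b`
(at `u = 0`) to `a` (at `u = 2`); `u = 1` gives the geometric mean. -/
noncomputable def geomPt (a b u : ℝ) : ℝ := a ^ (u / 2) * b ^ (1 - u / 2)

lemma geomPt_two_sub (a b u : ℝ) : geomPt a b (2 - u) = geomPt b a u := by
  unfold geomPt
  rw [mul_comm]
  congr 2 <;> ring

lemma geomPt_zero (a b : ℝ) : geomPt a b 0 = b := by simp [geomPt]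

lemma geomPt_two (a b : ℝ) : geomPt a b 2 = a := by simp [geomPt]

lemma geomPt_eq_exp {a b : ℝ} (ha : 0 < a) (hb : 0 < b) (u : ℝ) :
    geomPt a b u = rexp (log b + u / 2 * (log a - log b)) := by
  unfold geomPt
  rw [rpow_def_of_pos ha, rpow_def_of_pos hb, ← Real.exp_add]
  congr 1; ring

lemma geomPt_pos {a b : ℝ} (ha : 0 < a) (hb : 0 < b) (u : ℝ) : 0 < geomPt a b u := by
  rw [geomPt_eq_exp ha hb]; positivity

lemma geomPt_one {a b : ℝ} (ha : 0 < a) (hb : 0 < b) : geomPt a b 1 = √(a * b) := by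
  unfold geomPt
  rw [Real.sqrt_eq_rpow, mul_rpow ha.le hb.le]
  norm_num

lemma geomPt_mul_geomPt {a b : ℝ} (ha : 0 < a) (hb : 0 < b) (u : ℝ) :
    geomPt b a u * geomPt a b u = a * b := by
  rw [geomPt_eq_exp ha hb, geomPt_eq_exp hb ha, ← Real.exp_add]
  rw [show log a + u / 2 * (log b - log a) + (log b + u / 2 * (log a - log b)) =
    log a + log b by ring, Real.exp_add, exp_log ha, exp_log hb]

lemma hasDerivAt_geomPt {a b : ℝ} (ha : 0 < a) (hb : 0 < b) (u : ℝ) :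
    HasDerivAt (geomPt a b) (geomPt a b u * ((log a - log b) / 2)) u := by
  have h1 : geomPt a b = fun u => rexp (log b + u / 2 * (log a - log b)) :=
    funext (geomPt_eq_exp ha hb)
  rw [h1]
  have h2 : HasDerivAt (fun u : ℝ => log b + u / 2 * (log a - log b))
      (1 / 2 * (log a - log b)) u :=
    (((hasDerivAt_id u).div_const 2).mul_const _).const_add _
  convert h2.exp using 1
  ring

lemma geomPt_mono {a b : ℝ} (ha : 0 < a) (hab : a ≤ b) : Monotone (geomPt b a) := by
  intro u v huv
  have hb := ha.trans_le hab
  rw [geomPt_eq_exp hb ha, geomPt_eq_exp hb ha, Real.exp_le_exp]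
  have := Real.log_le_log ha hab
  nlinarith

lemma geomPt_anti {a b : ℝ} (ha : 0 < a) (hab : a ≤ b) : Antitone (geomPt a b) := by
  intro u v huv
  rw [← geomPt_two_sub b a, ← geomPt_two_sub b a]
  exact geomPt_mono ha hab (by linarith)

/-! ### Integrals of exponentials -/

/-- `h₃` is the mean of the exponential `u ↦ c ^ u` over `[0, 1]`. -/
lemma integral_rpow_eq_h₃ {c : ℝ} (hc : 0 < c) : ∫ u in (0:ℝ)..1, c ^ u = h₃ c := by
  unfold h₃
  split_ifs with h
  · simp [h]
  · have hl : log c ≠ 0 := Real.log_ne_zero_of_pos_of_ne_one hc h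
    have := integral_eq_sub_of_hasDerivAt (a := 0) (b := 1) (f := fun u : ℝ => c ^ u / log c)
      (f' := fun u => c ^ u) (fun u _ => by
        refine (((hasDerivAt_id u).const_rpow hc).div_const (log c)).congr_deriv ?_
        simp only [id]; field_simp)
      ((continuous_const.rpow continuous_id (fun _ => Or.inl hc.ne')).intervalIntegrable _ _)
    rw [this]; simp; field_simp

/-- Hölder's inequality with exponents `q / (q - 1)` and `q` for the product `u * c ^ (u / q)`. -/
lemma integral_mul_rpow_le {c q : ℝ} (hc : 0 < c) (hq : 1 < q) :
    ∫ u in (0:ℝ)..1, u * c ^ (u / q) ≤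
      ((q - 1) / (2 * q - 1)) ^ (1 - 1 / q) * h₃ c ^ (1 / q) := by
  have hq0 : 0 < q := by linarith
  have hq1 : 0 < q - 1 := by linarith
  have hpq : (q / (q - 1)).HolderConjugate q := by
    rw [Real.holderConjugate_iff]
    refine ⟨by rw [lt_div_iff₀ hq1]; linarith, by field_simp; ring⟩
  have hp0 : 0 < q / (q - 1) := by positivity
  have hcont : Continuous fun u : ℝ => c ^ (u / q) :=
    continuous_const.rpow (continuous_id.div_const q) (fun _ => Or.inl hc.ne')
  have hfin : IsFiniteMeasure (volume.restrict (Ioc (0:ℝ) 1)) := by infer_instance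
  have key := integral_mul_le_Lp_mul_Lq_of_nonneg (μ := volume.restrict (Ioc (0:ℝ) 1)) hpq
    (f := fun u => u) (g := fun u => c ^ (u / q))
    (by filter_upwards [ae_restrict_mem measurableSet_Ioc] with u hu using hu.1.le)
    (by filter_upwards with u; exact (rpow_pos_of_pos hc _).le)
    (by
      refine MemLp.of_bound continuous_id.aestronglyMeasurable 1 ?_
      filter_upwards [ae_restrict_mem measurableSet_Ioc] with u hu
      simpa [abs_of_pos hu.1] using hu.2)
    (by
      obtain ⟨C, hC⟩ := isCompact_Icc.exists_bound_of_continuousOn (s := Icc (0:ℝ) 1)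
        hcont.continuousOn
      refine MemLp.of_bound hcont.aestronglyMeasurable C ?_
      filter_upwards [ae_restrict_mem measurableSet_Ioc] with u hu
        using hC u (Ioc_subset_Icc_self hu))
  simp only [← intervalIntegral.integral_of_le (zero_le_one' ℝ)] at key
  have e1 : ∫ u in (0:ℝ)..1, u ^ (q / (q - 1)) = (q - 1) / (2 * q - 1) := by
    rw [integral_rpow (Or.inl (by linarith)), one_rpow, zero_rpow (by positivity)]
    rw [show q / (q - 1) + 1 = (2 * q - 1) / (q - 1) by field_simp; ring, sub_zero, one_div_div]
  have e2 : ∫ u in (0:ℝ)..1, (c ^ (u / q)) ^ q = h₃ c := by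
    rw [← integral_rpow_eq_h₃ hc]
    congr 1; ext u
    rw [← rpow_mul hc.le]; congr 1; field_simp
  rw [e1, e2] at key
  convert key using 3
  field_simp

/-! ### Estimates from geometric convexity -/

lemma rpow_le_affine {t s : ℝ} (ht : 0 ≤ t) (hs : s ∈ Ioc (0:ℝ) 1) :
    t ^ s ≤ s * t + (1 - s) := by
  have := rpow_one_add_le_one_add_mul_self (s := t - 1) (by linarith) hs.1.le hs.2
  rw [show 1 + (t - 1) = t by ring] at this
  linarith

/-- The pointwise estimate of `x * |f' x|` at `x = geomPt a b u`: since `P, R ≥ 1`, the exponents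
`l ^ s` in the `s`-geometric convexity inequality may be replaced by the larger `s * l + 1 - s`,
which turns the bound into an exponential in `u`. -/
lemma geomPt_mul_le {a b P R q s u v : ℝ} (ha : 0 < a) (hb : 0 < b) (hP : 1 ≤ P) (hR : 1 ≤ R)
    (hq : 1 < q) (hs : s ∈ Ioc (0:ℝ) 1) (hu : u ∈ Icc (0:ℝ) 2) (hv : 0 ≤ v)
    (h : v ^ q ≤ (P ^ q) ^ ((u / 2) ^ s) * (R ^ q) ^ ((1 - u / 2) ^ s)) :
    geomPt a b u * v ≤
      b * R * P ^ (1 - s) * ((a * P ^ s / (b * R ^ s)) ^ (q / 2)) ^ (u / q) := by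
  have hP0 : 0 < P := by linarith
  have hR0 : 0 < R := by linarith
  have hq0 : 0 < q := by linarith
  have hv' : v ≤ P ^ (s * (u / 2) + (1 - s)) * R ^ (s * (1 - u / 2) + (1 - s)) := by
    have h1 : v ≤ P ^ ((u / 2) ^ s) * R ^ ((1 - u / 2) ^ s) := by
      rw [← Real.rpow_le_rpow_iff hv (by positivity) hq0]
      rw [mul_rpow (by positivity) (by positivity)]
      refine h.trans_eq ?_
      simp only [← rpow_mul hP0.le, ← rpow_mul hR0.le, mul_comm q]
    refine h1.trans ?_
    gcongr
    · exact rpow_le_affine (by linarith [hu.1]) hs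
    · exact rpow_le_affine (by linarith [hu.2]) hs
  refine (mul_le_mul_of_nonneg_left hv' (geomPt_pos ha hb u).le).trans_eq ?_
  rw [← rpow_mul (by positivity), show q / 2 * (u / q) = u / 2 by field_simp]
  unfold geomPt
  rw [← exp_log ha, ← exp_log hb, ← exp_log hP0, ← exp_log hR0]
  simp only [← Real.exp_mul, ← Real.exp_add, ← Real.exp_sub]
  congr 1; ring

/-! ### The weighted integral and the comparison with the mean -/

/-- Substituting `x = geomPt b a u` in the integral of `f x * f (a * b / x)` against `dx / x`; the
symmetry `u ↦ 2 - u` of the integrand reduces the range `[0, 2]` to `[0, 1]`. -/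
lemma integral_eq_geomPt {f : ℝ → ℝ} {a b : ℝ} (ha : 0 < a) (hab : a < b)
    (hf : ContinuousOn f (Icc a b)) :
    (1 / (log b - log a)) * ∫ x in a..b, (f x / x) * f (a * b / x) =
      ∫ u in (0:ℝ)..1, f (geomPt b a u) * f (geomPt a b u) := by
  have hb : 0 < b := ha.trans hab
  have hL : 0 < log b - log a := sub_pos.2 (Real.log_lt_log ha hab)
  have hXc : Continuous (geomPt b a) :=
    continuous_iff_continuousAt.2 fun u => (hasDerivAt_geomPt hb ha u).continuousAt
  have hYc : Continuous (geomPt a b) :=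
    continuous_iff_continuousAt.2 fun u => (hasDerivAt_geomPt ha hb u).continuousAt
  have hX : ∀ u ∈ Icc (0:ℝ) 2, geomPt b a u ∈ Icc a b := fun u hu =>
    ⟨(geomPt_zero b a).symm.le.trans (geomPt_mono ha hab.le hu.1),
      (geomPt_mono ha hab.le hu.2).trans_eq (geomPt_two b a)⟩
  have hY : ∀ u ∈ Icc (0:ℝ) 2, geomPt a b u ∈ Icc a b := fun u hu => by
    rw [← geomPt_two_sub]; exact hX _ ⟨by linarith [hu.2], by linarith [hu.1]⟩
  have hdiv : ∀ u, a * b / geomPt b a u = geomPt a b u := fun u => by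
    rw [div_eq_iff (geomPt_pos hb ha u).ne', mul_comm (geomPt a b u), geomPt_mul_geomPt ha hb]
  have hg : ContinuousOn (fun x => (f x / x) * f (a * b / x)) (Icc a b) := by
    have hne : ∀ x ∈ Icc a b, x ≠ 0 := fun x hx => (ha.trans_le hx.1).ne'
    refine (hf.div continuousOn_id hne).mul (hf.comp (continuousOn_const.div continuousOn_id hne) ?_)
    intro x hx
    have hx0 : 0 < x := ha.trans_le hx.1
    constructor
    · rw [le_div_iff₀ hx0]; nlinarith [hx.2]
    · rw [div_le_iff₀ hx0]; nlinarith [hx.1]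
  have hsub := integral_comp_mul_deriv'' (a := 0) (b := 2) (f := geomPt b a)
    (f' := fun u => geomPt b a u * ((log b - log a) / 2))
    (g := fun x => (f x / x) * f (a * b / x)) hXc.continuousOn
    (fun u _ => (hasDerivAt_geomPt hb ha u).hasDerivWithinAt)
    (hXc.mul continuous_const).continuousOn
    (hg.mono (by
      rintro _ ⟨u, hu, rfl⟩
      rw [uIcc_of_le zero_le_two] at hu
      exact hX u hu))
  rw [geomPt_zero, geomPt_two] at hsub
  rw [← hsub]
  have hphi : ContinuousOn (fun u => f (geomPt b a u) * f (geomPt a b u)) (Icc 0 2) :=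
    (hf.comp hXc.continuousOn hX).mul (hf.comp hYc.continuousOn hY)
  have e1 : ∀ u, ((fun x => (f x / x) * f (a * b / x)) ∘ geomPt b a) u *
      (geomPt b a u * ((log b - log a) / 2)) =
      (log b - log a) / 2 * (f (geomPt b a u) * f (geomPt a b u)) := fun u => by
    have := (geomPt_pos hb ha u).ne'
    simp only [Function.comp, hdiv]
    field_simp
  simp only [e1, intervalIntegral.integral_const_mul]
  have e2 : ∫ u in (1:ℝ)..2, f (geomPt b a u) * f (geomPt a b u) =
      ∫ u in (0:ℝ)..1, f (geomPt b a u) * f (geomPt a b u) := by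
    have := intervalIntegral.integral_comp_sub_left (a := 0) (b := 1)
      (fun u => f (geomPt b a u) * f (geomPt a b u)) 2
    simp only [geomPt_two_sub] at this
    norm_num at this
    rw [← this]
    congr 1; ext u; ring
  rw [← intervalIntegral.integral_add_adjacent_intervals (b := 1), e2]
  · field_simp; ring
  · exact (hphi.mono (Icc_subset_Icc_right one_le_two)).intervalIntegrable_of_Icc zero_le_one
  · exact (hphi.mono (Icc_subset_Icc_left zero_le_one)).intervalIntegrable_of_Icc one_le_two

/-- If `|u * φ' u| ≤ k u` on `[0, 1]`, then the value of `φ` at the endpoint `1` differs from its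
mean by at most `∫ k`. The comparison of derivatives is applied to
`u ↦ u * φ u - ∫₀ᵘ φ`, so no integrability of `φ'` is required. -/
lemma abs_sub_integral_le {φ φ' k : ℝ → ℝ} {S : Set ℝ} (hS : IsOpen S)
    (hS1 : Icc (0:ℝ) 1 ⊆ S) (hφ : ∀ u ∈ S, HasDerivAt φ (φ' u) u) (hk : Continuous k)
    (hle : ∀ u ∈ Icc (0:ℝ) 1, |u * φ' u| ≤ k u) :
    |φ 1 - ∫ u in (0:ℝ)..1, φ u| ≤ ∫ u in (0:ℝ)..1, k u := by
  have hc : ContinuousOn φ S := fun u hu => (hφ u hu).continuousAt.continuousWithinAt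
  have hF : ∀ u ∈ Icc (0:ℝ) 1,
      HasDerivAt (fun u => u * φ u - ∫ r in (0:ℝ)..u, φ r) (u * φ' u) u := by
    intro u hu
    have h1 : HasDerivAt (fun u => ∫ r in (0:ℝ)..u, φ r) (φ u) u :=
      integral_hasDerivAt_right
        ((hc.mono ((Icc_subset_Icc_right hu.2).trans hS1)).intervalIntegrable_of_Icc hu.1)
        (hc.stronglyMeasurableAtFilter hS u (hS1 hu)) (hφ u (hS1 hu)).continuousAt
    refine (((hasDerivAt_id u).mul (hφ u (hS1 hu))).sub h1).congr_deriv ?_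
    simp
  have := image_norm_le_of_norm_deriv_right_le_deriv_boundary
    (f := fun u => u * φ u - ∫ r in (0:ℝ)..u, φ r) (f' := fun u => u * φ' u) (a := 0) (b := 1)
    (B := fun u => ∫ r in (0:ℝ)..u, k r) (B' := k)
    (fun u hu => (hF u hu).continuousAt.continuousWithinAt)
    (fun u hu => (hF u (Ico_subset_Icc_self hu)).hasDerivWithinAt)
    (by simp) (fun u => hk.integral_hasStrictDerivAt 0 u |>.hasDerivAt)
    (fun u hu => hle u (Ico_subset_Icc_self hu)) (right_mem_Icc.2 zero_le_one)
  simpa using this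

/-! ### The midpoint inequality -/

theorem stmt_15 (I : Set ℝ) (hI : I ⊆ Set.Ioi (0:ℝ)) (hI' : I.OrdConnected)
    (f f' : ℝ → ℝ) (a b : ℝ) (ha : a ∈ interior I) (hb : b ∈ interior I) (hab : a < b)
    (hf : ∀ x ∈ interior I, HasDerivAt f (f' x) x)
    (hint : IntervalIntegrable f' volume a b)
    (hpos : ∀ x ∈ I, 0 < f x)
    (q s : ℝ) (hq : 1 < q) (hs : s ∈ Set.Ioc (0:ℝ) 1)
    (hconv : ∀ x ∈ Set.Icc a b, ∀ y ∈ Set.Icc a b, ∀ l ∈ Set.Icc (0:ℝ) 1,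
      |f' (x ^ l * y ^ (1 - l))| ^ q ≤ (|f' x| ^ q) ^ (l ^ s) * (|f' y| ^ q) ^ ((1 - l) ^ s))
    (M₁ M₂ : ℝ)
    (hM₁ : IsGreatest ((fun x => |f x|) '' Set.Icc a (Real.sqrt (a*b))) M₁)
    (hM₂ : IsGreatest ((fun x => |f x|) '' Set.Icc (Real.sqrt (a*b)) b) M₂)
    (hfa : 1 ≤ |f' a|) (hfb : 1 ≤ |f' b|) :
    |f (Real.sqrt (a*b)) ^ 2 - (1 / (Real.log b - Real.log a)) * ∫ x in a..b, (f x / x) * f (a * b / x)|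
      ≤ (Real.log (b / a) / 2) * ((q - 1) / (2 * q - 1)) ^ (1 - 1 / q) *
        (b * |f' b| * |f' a| ^ (1 - s) * M₁ * (h₃ ((a * |f' a| ^ s / (b * |f' b| ^ s)) ^ (q / 2))) ^ (1 / q)
          + a * |f' a| * |f' b| ^ (1 - s) * M₂ * (h₃ ((b * |f' b| ^ s / (a * |f' a| ^ s)) ^ (q / 2))) ^ (1 / q)) := by
  have hnn := interior_subset (s := I)
  have ha0 : 0 < a := hI (hnn ha)
  have hb0 : 0 < b := ha0.trans hab
  have hL : 0 < log b - log a := sub_pos.2 (Real.log_lt_log ha0 hab)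
  have hJ : Icc a b ⊆ interior I := hI'.interior.out ha hb
  have hfc : ContinuousOn f (Icc a b) :=
    fun x hx => (hf x (hJ hx)).continuousAt.continuousWithinAt
  have hX1 : ∀ u ∈ Icc (0:ℝ) 1, geomPt b a u ∈ Icc a √(a * b) := fun u hu =>
    ⟨(geomPt_zero b a).symm.le.trans (geomPt_mono ha0 hab.le hu.1),
      (geomPt_mono ha0 hab.le hu.2).trans_eq (by rw [geomPt_one hb0 ha0, mul_comm])⟩
  have hY1 : ∀ u ∈ Icc (0:ℝ) 1, geomPt a b u ∈ Icc √(a * b) b := fun u hu =>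
    ⟨(geomPt_one ha0 hb0).symm.le.trans (geomPt_anti ha0 hab.le hu.2),
      (geomPt_anti ha0 hab.le hu.1).trans_eq (geomPt_zero a b)⟩
  have haG : a ≤ √(a * b) := Real.le_sqrt_of_sq_le (by nlinarith)
  have hGb : √(a * b) ≤ b := Real.sqrt_le_iff.2 ⟨hb0.le, by nlinarith⟩
  have hX : ∀ u ∈ Icc (0:ℝ) 1, geomPt b a u ∈ Icc a b :=
    fun u hu => Icc_subset_Icc_right hGb (hX1 u hu)
  have hY : ∀ u ∈ Icc (0:ℝ) 1, geomPt a b u ∈ Icc a b :=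
    fun u hu => Icc_subset_Icc_left haG (hY1 u hu)
  have hM₁0 : 0 ≤ M₁ := (abs_nonneg _).trans (hM₁.2 ⟨_, left_mem_Icc.2 haG, rfl⟩)
  have hM₂0 : 0 ≤ M₂ := (abs_nonneg _).trans (hM₂.2 ⟨_, left_mem_Icc.2 hGb, rfl⟩)
  have hXc : Continuous (geomPt b a) :=
    continuous_iff_continuousAt.2 fun u => (hasDerivAt_geomPt hb0 ha0 u).continuousAt
  have hYc : Continuous (geomPt a b) :=
    continuous_iff_continuousAt.2 fun u => (hasDerivAt_geomPt ha0 hb0 u).continuousAt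
  have hPa : 0 < |f' a| := by linarith
  have hPb : 0 < |f' b| := by linarith
  set θ := (a * |f' a| ^ s / (b * |f' b| ^ s)) ^ (q / 2) with hθ
  set η := (b * |f' b| ^ s / (a * |f' a| ^ s)) ^ (q / 2) with hη
  have hθ0 : 0 < θ := by positivity
  have hη0 : 0 < η := by positivity
  set C₁ := b * |f' b| * |f' a| ^ (1 - s) with hC₁
  set C₂ := a * |f' a| * |f' b| ^ (1 - s) with hC₂
  have hC₁0 : 0 ≤ C₁ := by positivity
  have hC₂0 : 0 ≤ C₂ := by positivity
  have hamem : a ∈ Icc a b := left_mem_Icc.2 hab.le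
  have hbmem : b ∈ Icc a b := right_mem_Icc.2 hab.le
  have hbY : ∀ u ∈ Icc (0:ℝ) 1, geomPt a b u * |f' (geomPt a b u)| ≤ C₁ * θ ^ (u / q) :=
    fun u hu => geomPt_mul_le ha0 hb0 hfa hfb hq hs ⟨hu.1, by linarith [hu.2]⟩ (abs_nonneg _)
      (hconv a hamem b hbmem (u / 2) ⟨by linarith [hu.1], by linarith [hu.2]⟩)
  have hbX : ∀ u ∈ Icc (0:ℝ) 1, geomPt b a u * |f' (geomPt b a u)| ≤ C₂ * η ^ (u / q) :=
    fun u hu => geomPt_mul_le hb0 ha0 hfb hfa hq hs ⟨hu.1, by linarith [hu.2]⟩ (abs_nonneg _)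
      (hconv b hbmem a hamem (u / 2) ⟨by linarith [hu.1], by linarith [hu.2]⟩)
  have hcont : ∀ c : ℝ, 0 < c → Continuous fun u : ℝ => u * c ^ (u / q) := fun c hc =>
    continuous_id.mul
      (continuous_const.rpow (continuous_id.div_const q) (fun _ => Or.inl hc.ne'))
  rw [integral_eq_geomPt ha0 hab hfc]
  have hmain := abs_sub_integral_le
    (φ := fun u => f (geomPt b a u) * f (geomPt a b u))
    (φ' := fun u => f' (geomPt b a u) * (geomPt b a u * ((log b - log a) / 2)) * f (geomPt a b u)
      + f (geomPt b a u) * (f' (geomPt a b u) * (geomPt a b u * ((log a - log b) / 2))))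
    (k := fun u => (log b - log a) / 2 * (C₁ * M₁ * (u * θ ^ (u / q)) +
      C₂ * M₂ * (u * η ^ (u / q))))
    (S := geomPt b a ⁻¹' interior I ∩ geomPt a b ⁻¹' interior I)
    ((isOpen_interior.preimage hXc).inter (isOpen_interior.preimage hYc))
    (fun u hu => ⟨hJ (hX u hu), hJ (hY u hu)⟩)
    (fun u hu => ((hf _ hu.1).comp u (hasDerivAt_geomPt hb0 ha0 u)).mul
      ((hf _ hu.2).comp u (hasDerivAt_geomPt ha0 hb0 u)))
    (continuous_const.mul (((hcont θ hθ0).const_mul _).add ((hcont η hη0).const_mul _)))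
    (by
      intro u hu
      have hx0 := geomPt_pos hb0 ha0 u
      have hy0 := geomPt_pos ha0 hb0 u
      have h1 : |f (geomPt b a u)| ≤ M₁ := hM₁.2 ⟨_, hX1 u hu, rfl⟩
      have h2 : |f (geomPt a b u)| ≤ M₂ := hM₂.2 ⟨_, hY1 u hu, rfl⟩
      have h3 := mul_le_mul (hbX u hu) h2 (abs_nonneg _) (by positivity)
      have h4 := mul_le_mul (hbY u hu) h1 (abs_nonneg _) (by positivity)
      have e : u * (f' (geomPt b a u) * (geomPt b a u * ((log b - log a) / 2)) * f (geomPt a b u)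
          + f (geomPt b a u) * (f' (geomPt a b u) * (geomPt a b u * ((log a - log b) / 2)))) =
          (u * ((log b - log a) / 2)) * (geomPt b a u * f' (geomPt b a u) * f (geomPt a b u) -
            geomPt a b u * f' (geomPt a b u) * f (geomPt b a u)) := by ring
      have h5 : |geomPt b a u * f' (geomPt b a u) * f (geomPt a b u) -
            geomPt a b u * f' (geomPt a b u) * f (geomPt b a u)| ≤
            C₂ * η ^ (u / q) * M₂ + C₁ * θ ^ (u / q) * M₁ := by
        refine (abs_sub _ _).trans ?_
        simp only [abs_mul, abs_of_pos hx0, abs_of_pos hy0]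
        exact add_le_add h3 h4
      have hu0 : 0 ≤ u * ((log b - log a) / 2) := mul_nonneg hu.1 (by linarith)
      rw [e, abs_mul, abs_of_nonneg hu0]
      refine (mul_le_mul_of_nonneg_left h5 hu0).trans_eq ?_
      ring)
  rw [geomPt_one ha0 hb0, geomPt_one hb0 ha0, mul_comm b a, ← sq,
    intervalIntegral.integral_const_mul, intervalIntegral.integral_add
      (((hcont θ hθ0).const_mul _).intervalIntegrable _ _)
      (((hcont η hη0).const_mul _).intervalIntegrable _ _),
    intervalIntegral.integral_const_mul, intervalIntegral.integral_const_mul] at hmain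
  refine hmain.trans ?_
  rw [Real.log_div hb0.ne' ha0.ne', mul_assoc ((log b - log a) / 2)]
  refine mul_le_mul_of_nonneg_left ?_ (by linarith)
  have i1 := mul_le_mul_of_nonneg_left (integral_mul_rpow_le hθ0 hq) (mul_nonneg hC₁0 hM₁0)
  have i2 := mul_le_mul_of_nonneg_left (integral_mul_rpow_le hη0 hq) (mul_nonneg hC₂0 hM₂0)
  refine (add_le_add i1 i2).trans_eq ?_
  ring
end

section
/- Let f : I ⊆ (0,∞) → (0,∞) be differentiable on I°, a, b ∈ I° with a < b, f' integrable on [a,b], and let |f'|^q be s-geometrically convex on [a,b] for some q > 1 and s ∈ (0,1]. If |f'(a)| ≤ 1 ≤ |f'(b)|, then |f(√(ab))² − (1/(ln b − ln a)) ∫_a^b (f(x)/x)·f(ab/x) dx| ≤ (ln(b/a)/2)·((q−1)/(2q−1))^{1−1/q}·[ b·|f'(b)|·M₁·h₃(θ)^{1/q} + a·|f'(a)|^s·|f'(b)|^{1−s}·M₂·h₃(ϑ)^{1/q} ]. -/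
/-!
Put `L = log b - log a`, `u t = a ^ (1 - t) * b ^ t` and `F = f ∘ u`. Since `a * b / u t = u (1 - t)`,
substituting `x = u t` turns the left-hand side into `|F (1/2) ^ 2 - ∫ t in 0..1, F t * F (1 - t)|`.
By symmetry about `1 / 2` and integration by parts this is at most
`2 * ∫ t in 0..1/2, t * (|F' t| * |F (1 - t)| + |F t| * |F' (1 - t)|)` (`core`), where `|F t| ≤ M₁` and
`|F (1 - t)| ≤ M₂`.

Geometric convexity gives `|F' t| ≤ L * K * exp (ρ t)` (`pointwise_bound`) with
`K = a * |f' a| ^ s * |f' b| ^ (1 - s)` and `exp ρ = b * |f' b| ^ s / (a * |f' a| ^ s)`, so that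
`K * exp ρ = b * |f' b|`. Hölder's inequality (`holder_bound`) bounds the two remaining integrals
of `t * exp (± ρ t)` in terms of `h₃ (exp (± ρ q / 2))`; these arguments of `h₃` are `ϑ` and `θ`.

Taking logarithms of `|f' a|` requires `f' a ≠ 0`, which holds by Darboux's theorem
(`deriv_left_ne_zero`).
-/

open Real MeasureTheory Set intervalIntegral

theorem integral_exp_half (c : ℝ) :
    ∫ t in (0:ℝ)..(1/2), Real.exp (c * t) = (1/2) * h₃ (Real.exp (c / 2)) := by
  by_cases hc : c = 0
  · simp [hc, h₃]
  · have h1 : Real.exp (c/2) ≠ 1 := by simpa using hc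
    rw [integral_comp_mul_left (fun x => Real.exp x) hc, integral_exp, h₃, if_neg h1, Real.log_exp]
    simp only [mul_zero, Real.exp_zero, smul_eq_mul]
    rw [show c * (1/2) = c / 2 by ring]
    field_simp

/-- Hölder's inequality with exponents `q / (q - 1)` and `q` applied to the product of `t` and
`exp (ρ t)`. -/
theorem holder_bound (ρ q : ℝ) (hq : 1 < q) :
    ∫ t in (0:ℝ)..(1/2), t * Real.exp (ρ * t) ≤
      1/4 * ((q-1)/(2*q-1)) ^ (1-1/q) * (h₃ (Real.exp (ρ * (q/2)))) ^ (1/q) := by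
  have hq0 : 0 < q := by linarith
  have hq1 : 0 < q - 1 := by linarith
  have hconj : (q/(q-1)).HolderConjugate q := by
    rw [Real.holderConjugate_iff]
    refine ⟨by rw [lt_div_iff₀ hq1]; linarith, ?_⟩
    field_simp; ring
  have hmem : ∀ (g : ℝ → ℝ) (r : ℝ), Continuous g →
      MemLp g (ENNReal.ofReal r) (volume.restrict (Ioc (0:ℝ) (1/2))) := by
    intro g r hg
    obtain ⟨C, hC⟩ := isCompact_Icc.exists_bound_of_continuousOn (s := Icc (0:ℝ) (1/2)) hg.continuousOn
    refine MemLp.of_bound hg.aestronglyMeasurable C ?_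
    exact (ae_restrict_iff' measurableSet_Ioc).2 (.of_forall fun x hx => hC x (Ioc_subset_Icc_self hx))
  have H := integral_mul_le_Lp_mul_Lq_of_nonneg hconj
    (μ := volume.restrict (Ioc (0:ℝ) (1/2))) (f := fun t => t) (g := fun t => Real.exp (ρ*t))
    ((ae_restrict_iff' measurableSet_Ioc).2 (.of_forall fun x hx => hx.1.le))
    (.of_forall fun x => (Real.exp_pos _).le) (hmem _ _ (by fun_prop)) (hmem _ _ (by fun_prop))
  simp only [← intervalIntegral.integral_of_le (show (0:ℝ) ≤ 1/2 by norm_num)] at H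
  have e1 : ∫ t in (0:ℝ)..(1/2), t ^ (q/(q-1)) = (1/2) ^ (1 + q/(q-1)) * ((q-1)/(2*q-1)) := by
    have : 0 < q/(q-1) := by positivity
    rw [integral_rpow (Or.inl (by linarith)), Real.zero_rpow (by positivity), add_comm 1 (q/(q-1))]
    have h2 : q/(q-1) + 1 = (2*q-1)/(q-1) := by field_simp; ring
    have h3 : 2*q-1 ≠ 0 := by linarith
    rw [sub_zero, div_eq_mul_inv, h2, inv_div]
  have e2 : ∫ t in (0:ℝ)..(1/2), Real.exp (ρ*t) ^ q = (1/2) * h₃ (Real.exp (ρ*(q/2))) := by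
    rw [show ρ*(q/2) = (ρ*q)/2 by ring, ← integral_exp_half]
    congr 1; ext t
    rw [← Real.exp_mul]; ring_nf
  have hh : 0 ≤ h₃ (Real.exp (ρ*(q/2))) := by
    have : 0 ≤ ∫ t in (0:ℝ)..(1/2), Real.exp (ρ*t) ^ q :=
      intervalIntegral.integral_nonneg (by norm_num) (fun t _ => by positivity)
    linarith
  have h3 : 0 < 2*q-1 := by linarith
  refine H.trans_eq ?_
  rw [e1, e2, Real.mul_rpow (by positivity) (by positivity), Real.mul_rpow (by positivity) hh,
    ← Real.rpow_mul (by norm_num), show 1/(q/(q-1)) = 1 - 1/q by field_simp]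
  have e3 : ((1:ℝ)/2)^((1 + q/(q-1)) * (1-1/q)) * (1/2)^(1/q) = 1/4 := by
    rw [← Real.rpow_add (by norm_num)]
    have : (1 + q/(q-1)) * (1-1/q) + 1/q = 2 := by field_simp; ring
    rw [this]; norm_num
  rw [← e3]; ring

/-- The analytic estimate on `[0, 1]`. With `G t = F t * F (1 - t)`, the function
`t ↦ t * G t - ∫ u in 0..t, G u` vanishes at `0`, has derivative `t * G' t`, and at `1 / 2` equals
half of the quantity to be bounded, since `G` is symmetric about `1 / 2`. Comparing it with a
primitive of the pointwise bound for `t * |G' t|` avoids any integrability question about `F'`. -/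
theorem core (F F' : ℝ → ℝ) (K M₁ M₂ ρ : ℝ) (hF : ∀ t ∈ Icc (0:ℝ) 1, HasDerivAt F (F' t) t)
    (h1 : ∀ t ∈ Icc (0:ℝ) (1/2), |F t| ≤ M₁) (h2 : ∀ t ∈ Icc (1/2:ℝ) 1, |F t| ≤ M₂)
    (hK : ∀ t ∈ Icc (0:ℝ) 1, |F' t| ≤ K * Real.exp (ρ * t)) :
    |F (1/2) ^ 2 - ∫ t in (0:ℝ)..1, F t * F (1 - t)| ≤
      2 * (M₁ * (K * Real.exp ρ) * (∫ t in (0:ℝ)..(1/2), t * Real.exp (-ρ * t)) +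
        M₂ * K * ∫ t in (0:ℝ)..(1/2), t * Real.exp (ρ * t)) := by
  have hFc : ContinuousOn F (Icc 0 1) := fun t ht => (hF t ht).continuousAt.continuousWithinAt
  set G : ℝ → ℝ := fun t => F t * F (1 - t) with hG
  have hGc : ContinuousOn G (Icc 0 1) := by
    refine hFc.mul (hFc.comp (by fun_prop) ?_)
    intro t ht; exact ⟨by linarith [ht.2], by linarith [ht.1]⟩
  -- a continuous extension, so that `t ↦ ∫ G` is differentiable on the whole line
  set E : ℝ → ℝ := IccExtend (zero_le_one (α := ℝ)) ((Icc 0 1).domRestrict G) with hE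
  have hEc : Continuous E := (continuousOn_iff_continuous_domRestrict.1 hGc).Icc_extend'
  have hEG : ∀ t ∈ Icc (0:ℝ) 1, E t = G t := fun t ht => IccExtend_of_mem _ _ ht
  have hGd : ∀ t ∈ Icc (0:ℝ) 1, HasDerivAt G (F' t * F (1-t) - F t * F' (1-t)) t := by
    intro t ht
    have h := hF (1-t) ⟨by linarith [ht.2], by linarith [ht.1]⟩
    have h' : HasDerivAt G _ t := (hF t ht).mul (h.comp t ((hasDerivAt_id t).const_sub 1))
    exact h'.congr_deriv (by simp; ring)
  have hGi : ∀ c ∈ Icc (0:ℝ) 1, ∀ d ∈ Icc (0:ℝ) 1, IntervalIntegrable G volume c d :=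
    fun c hc d hd => (hGc.mono (uIcc_subset_Icc hc hd)).intervalIntegrable
  have hsym : ∫ t in (0:ℝ)..1, G t = 2 * ∫ t in (0:ℝ)..(1/2), E t := by
    have m0 : (0:ℝ) ∈ Icc (0:ℝ) 1 := by simp
    have m1 : (1:ℝ) ∈ Icc (0:ℝ) 1 := by simp
    have mh : (1/2:ℝ) ∈ Icc (0:ℝ) 1 := by norm_num
    rw [← intervalIntegral.integral_add_adjacent_intervals (hGi 0 m0 (1/2) mh) (hGi _ mh _ m1)]
    have e : ∫ t in (1/2:ℝ)..1, G t = ∫ t in (0:ℝ)..(1/2), G t := by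
      have h : ∫ t in (0:ℝ)..(1/2), G (1 - t) = ∫ t in (1/2:ℝ)..1, G t := by
        rw [intervalIntegral.integral_comp_sub_left G 1]; norm_num
      rw [← h]
      congr 1; ext t; simp [hG, mul_comm]
    rw [e, two_mul]
    have : ∫ t in (0:ℝ)..(1/2), G t = ∫ t in (0:ℝ)..(1/2), E t := by
      refine intervalIntegral.integral_congr fun t ht => ?_
      rw [uIcc_of_le (by norm_num)] at ht
      exact (hEG t ⟨ht.1, by linarith [ht.2]⟩).symm
    rw [this]
  set W : ℝ → ℝ := fun t => M₁ * (K * Real.exp ρ) * (t * Real.exp (-ρ * t)) +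
    M₂ * K * (t * Real.exp (ρ * t)) with hW
  have hWc : Continuous W := by fun_prop
  have key := image_norm_le_of_norm_deriv_right_le_deriv_boundary (a := 0) (b := 1/2)
    (f := fun t => t * G t - ∫ u in (0:ℝ)..t, E u)
    (f' := fun t => t * (F' t * F (1-t) - F t * F' (1-t)))
    (B := fun t => ∫ u in (0:ℝ)..t, W u) (B' := W) ?_ ?_ (by simp)
    (fun t => (hWc.integral_hasStrictDerivAt 0 t).hasDerivAt) ?_
    (x := 1/2) ⟨by norm_num, le_rfl⟩
  · have e1 : ∫ u in (0:ℝ)..(1/2), W u = (M₁ * (K * Real.exp ρ) * (∫ t in (0:ℝ)..(1/2), t * Real.exp (-ρ * t)) +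
        M₂ * K * ∫ t in (0:ℝ)..(1/2), t * Real.exp (ρ * t)) := by
      rw [hW, intervalIntegral.integral_add, intervalIntegral.integral_const_mul,
        intervalIntegral.integral_const_mul]
      all_goals exact Continuous.intervalIntegrable (by fun_prop) _ _
    have e2 : G (1/2) = F (1/2)^2 := by
      simp only [hG]; norm_num; ring
    rw [← e1, hsym, ← e2]
    rw [Real.norm_eq_abs] at key
    rw [show G (1/2) - 2 * ∫ t in (0:ℝ)..(1/2), E t = 2 * (1/2 * G (1/2) - ∫ t in (0:ℝ)..(1/2), E t)
      by ring, abs_mul, abs_two]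
    linarith
  · refine ContinuousOn.sub (continuousOn_id.mul (hGc.mono (Icc_subset_Icc le_rfl (by norm_num)))) ?_
    exact (intervalIntegral.continuous_primitive (fun _ _ => hEc.intervalIntegrable _ _) 0).continuousOn
  · intro t ht
    have ht' : t ∈ Icc (0:ℝ) 1 := ⟨ht.1, by linarith [ht.2]⟩
    have h : HasDerivAt (fun t => t * G t - ∫ u in (0:ℝ)..t, E u) _ t :=
      ((hasDerivAt_id t).mul (hGd t ht')).sub (hEc.integral_hasStrictDerivAt 0 t).hasDerivAt
    exact (h.congr_deriv (by rw [hEG t ht']; simp)).hasDerivWithinAt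
  · intro t ht
    have ht' : t ∈ Icc (0:ℝ) 1 := ⟨ht.1, by linarith [ht.2]⟩
    have ht'' : 1 - t ∈ Icc (0:ℝ) 1 := ⟨by linarith [ht'.2], by linarith [ht'.1]⟩
    have b1 := h1 t ⟨ht.1, ht.2.le⟩
    have b2 := h2 (1-t) ⟨by linarith [ht.2], ht''.2⟩
    have k1 := hK t ht'
    have k2 := hK (1-t) ht''
    rw [Real.norm_eq_abs, abs_mul, abs_of_nonneg ht.1]
    have c1 : |F' t * F (1-t)| ≤ K * Real.exp (ρ*t) * M₂ := by
      rw [abs_mul]; exact mul_le_mul k1 b2 (abs_nonneg _) ((abs_nonneg _).trans k1)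
    have c2 : |F t * F' (1-t)| ≤ M₁ * (K * Real.exp (ρ*(1-t))) := by
      rw [abs_mul]; exact mul_le_mul b1 k2 (abs_nonneg _) ((abs_nonneg _).trans b1)
    calc t * |F' t * F (1-t) - F t * F' (1-t)| ≤ t * (K * Real.exp (ρ*t) * M₂ + M₁ * (K * Real.exp (ρ*(1-t)))) :=
          mul_le_mul_of_nonneg_left ((abs_sub _ _).trans (add_le_add c1 c2)) ht.1
      _ = W t := by
          rw [show ρ*(1-t) = ρ + -ρ*t by ring, Real.exp_add]; simp only [hW]; ring

/-- The consequence of `s`-geometric convexity at the point `u = a ^ (1 - t) * b ^ t`. It combines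
`μ ^ (α ^ s) ≤ μ ^ (s α)` for `μ ≤ 1` with `η ^ (α ^ s) ≤ η ^ (s α + 1 - s)` for `η ≥ 1`. -/
theorem pointwise_bound (f' : ℝ → ℝ) (a b q s : ℝ) (ha : 0 < a) (hab : a < b) (hq : 1 < q)
    (hs : s ∈ Set.Ioc (0:ℝ) 1)
    (hconv : ∀ x ∈ Set.Icc a b, ∀ y ∈ Set.Icc a b, ∀ l ∈ Set.Icc (0:ℝ) 1,
      |f' (x ^ l * y ^ (1 - l))| ^ q ≤ (|f' x| ^ q) ^ (l ^ s) * (|f' y| ^ q) ^ ((1 - l) ^ s))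
    (hfa : |f' a| ≤ 1) (hfb : 1 ≤ |f' b|) (hm : 0 < |f' a|) (t : ℝ) (ht : t ∈ Icc (0:ℝ) 1) :
    Real.exp (Real.log a + t * (Real.log b - Real.log a)) *
      |f' (Real.exp (Real.log a + t * (Real.log b - Real.log a)))| ≤
    a * |f' a| ^ s * |f' b| ^ (1 - s) *
      Real.exp ((Real.log b - Real.log a + s * (Real.log |f' b| - Real.log |f' a|)) * t) := by
  have hb : 0 < b := ha.trans hab
  have ht' : 1 - t ∈ Icc (0:ℝ) 1 := ⟨by linarith [ht.2], by linarith [ht.1]⟩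
  have hn : 0 < |f' b| := by linarith
  have hq0 : 0 < q := by linarith
  have h := hconv a ⟨le_rfl, hab.le⟩ b ⟨hab.le, le_rfl⟩ (1-t) ht'
  have hu : a ^ (1-t) * b ^ (1 - (1-t)) = Real.exp (Real.log a + t * (Real.log b - Real.log a)) := by
    rw [Real.rpow_def_of_pos ha, Real.rpow_def_of_pos hb, ← Real.exp_add]; ring_nf
  rw [hu, ← Real.rpow_mul hm.le, ← Real.rpow_mul hn.le, mul_comm q, mul_comm q, Real.rpow_mul hm.le,
    Real.rpow_mul hn.le, ← Real.mul_rpow (by positivity) (by positivity),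
    Real.rpow_le_rpow_iff (abs_nonneg _) (by positivity) hq0, sub_sub_cancel] at h
  have h1 : |f' a| ^ ((1-t)^s) ≤ |f' a| ^ (s * (1-t)) := by
    refine Real.rpow_le_rpow_of_exponent_ge hm hfa ?_
    calc s * (1-t) ≤ 1 * (1-t) := mul_le_mul_of_nonneg_right hs.2 ht'.1
      _ = (1-t)^(1:ℝ) := by simp
      _ ≤ (1-t)^s := Real.rpow_le_rpow_of_exponent_ge' ht'.1 ht'.2 hs.1.le hs.2
  have h2 : |f' b| ^ (t^s) ≤ |f' b| ^ (s * t + 1 - s) := by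
    refine Real.rpow_le_rpow_of_exponent_le hfb ?_
    -- Bernoulli's inequality for exponents in `[0, 1]`
    have := rpow_one_add_le_one_add_mul_self (s := t - 1) (by linarith [ht.1]) hs.1.le hs.2
    rw [add_sub_cancel] at this
    linarith
  have h3 := h.trans (mul_le_mul h1 h2 (by positivity) (by positivity))
  refine (mul_le_mul_of_nonneg_left h3 (Real.exp_pos _).le).trans_eq ?_
  rw [Real.exp_add, Real.exp_log ha, mul_assoc, mul_assoc, mul_assoc]
  congr 1
  simp only [Real.rpow_def_of_pos hm, Real.rpow_def_of_pos hn, ← Real.exp_add]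
  ring_nf

/-- If `f' a = 0`, convexity forces `f' = 0` on `(a, b)`, which contradicts `|f' b| ≥ 1` because
derivatives have the intermediate value property. -/
theorem deriv_left_ne_zero (f f' : ℝ → ℝ) (a b q s : ℝ) (ha : 0 < a) (hab : a < b)
    (hf : ∀ x ∈ Icc a b, HasDerivAt f (f' x) x) (hq : 1 < q)
    (hconv : ∀ x ∈ Set.Icc a b, ∀ y ∈ Set.Icc a b, ∀ l ∈ Set.Icc (0:ℝ) 1,
      |f' (x ^ l * y ^ (1 - l))| ^ q ≤ (|f' x| ^ q) ^ (l ^ s) * (|f' y| ^ q) ^ ((1 - l) ^ s))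
    (hfb : 1 ≤ |f' b|) : f' a ≠ 0 := by
  intro h0
  have hb : 0 < b := ha.trans hab
  have hq0 : 0 < q := by linarith
  have hzero : ∀ x ∈ Ioo a b, f' x = 0 := by
    intro x hx
    have hx0 : 0 < x := ha.trans hx.1
    have hL : 0 < Real.log b - Real.log a := sub_pos.2 (Real.log_lt_log ha hab)
    have la := Real.log_lt_log ha hx.1
    have lb := Real.log_lt_log hx0 hx.2
    set l := (Real.log b - Real.log x) / (Real.log b - Real.log a) with hl
    have hl0 : 0 < l := div_pos (by linarith) hL
    have hl1 : l ≤ 1 := (div_le_one hL).2 (by linarith)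
    have h := hconv a ⟨le_rfl, hab.le⟩ b ⟨hab.le, le_rfl⟩ l ⟨hl0.le, hl1⟩
    have hu : a ^ l * b ^ (1 - l) = x := by
      rw [Real.rpow_def_of_pos ha, Real.rpow_def_of_pos hb, ← Real.exp_add]
      have : Real.log a * l + Real.log b * (1 - l) = Real.log x := by
        rw [hl]; field_simp; ring
      rw [this, Real.exp_log hx0]
    rw [hu, h0, abs_zero, Real.zero_rpow hq0.ne', Real.zero_rpow (Real.rpow_pos_of_pos hl0 _).ne',
      zero_mul] at h
    have h' := le_antisymm h (by positivity)
    rw [Real.rpow_eq_zero (abs_nonneg _) hq0.ne'] at h'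
    exact abs_eq_zero.1 h'
  have hfw : ∀ x ∈ Icc a b, HasDerivWithinAt f (f' x) (Icc a b) x :=
    fun x hx => (hf x hx).hasDerivWithinAt
  have hne : f' b ≠ 0 := by rintro h; rw [h, abs_zero] at hfb; linarith
  -- a derivative has the intermediate value property, so it takes the value `f' b / 2` inside
  rcases lt_or_gt_of_ne hne with hneg | hpos
  · obtain ⟨x, hx, hxe⟩ := exists_hasDerivWithinAt_eq_of_lt_of_gt hab.le hfw
      (m := f' b / 2) (by linarith) (by linarith)
    rw [hzero x hx] at hxe; linarith
  · obtain ⟨x, hx, hxe⟩ := exists_hasDerivWithinAt_eq_of_gt_of_lt hab.le hfw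
      (m := f' b / 2) (by linarith) (by linarith)
    rw [hzero x hx] at hxe; linarith

theorem stmt_16 (I : Set ℝ) (hI : I ⊆ Set.Ioi (0:ℝ)) (hI' : I.OrdConnected)
    (f f' : ℝ → ℝ) (a b : ℝ) (ha : a ∈ interior I) (hb : b ∈ interior I) (hab : a < b)
    (hf : ∀ x ∈ interior I, HasDerivAt f (f' x) x)
    (hint : IntervalIntegrable f' volume a b)
    (hpos : ∀ x ∈ I, 0 < f x)
    (q s : ℝ) (hq : 1 < q) (hs : s ∈ Set.Ioc (0:ℝ) 1)
    (hconv : ∀ x ∈ Set.Icc a b, ∀ y ∈ Set.Icc a b, ∀ l ∈ Set.Icc (0:ℝ) 1,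
      |f' (x ^ l * y ^ (1 - l))| ^ q ≤ (|f' x| ^ q) ^ (l ^ s) * (|f' y| ^ q) ^ ((1 - l) ^ s))
    (M₁ M₂ : ℝ)
    (hM₁ : IsGreatest ((fun x => |f x|) '' Set.Icc a (Real.sqrt (a*b))) M₁)
    (hM₂ : IsGreatest ((fun x => |f x|) '' Set.Icc (Real.sqrt (a*b)) b) M₂)
    (hfa : |f' a| ≤ 1) (hfb : 1 ≤ |f' b|) :
    |f (Real.sqrt (a*b)) ^ 2 - (1 / (Real.log b - Real.log a)) * ∫ x in a..b, (f x / x) * f (a * b / x)|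
      ≤ (Real.log (b / a) / 2) * ((q - 1) / (2 * q - 1)) ^ (1 - 1 / q) *
        (b * |f' b| * M₁ * (h₃ ((a * |f' a| ^ s / (b * |f' b| ^ s)) ^ (q / 2))) ^ (1 / q)
          + a * |f' a| ^ s * |f' b| ^ (1 - s) * M₂ * (h₃ ((b * |f' b| ^ s / (a * |f' a| ^ s)) ^ (q / 2))) ^ (1 / q)) := by
  have ha0 : 0 < a := hI (interior_subset ha)
  have hb0 : 0 < b := hI (interior_subset hb)
  have hfab : ∀ x ∈ Icc a b, HasDerivAt f (f' x) x :=
    fun x hx => hf x (hI'.interior.out ha hb hx)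
  have hm : 0 < |f' a| := abs_pos.2 (deriv_left_ne_zero f f' a b q s ha0 hab hfab hq hconv hfb)
  have hn : 0 < |f' b| := by linarith
  set L := Real.log b - Real.log a with hL
  have hL0 : 0 < L := sub_pos.2 (Real.log_lt_log ha0 hab)
  set ρ := L + s * (Real.log |f' b| - Real.log |f' a|) with hρ
  set K := a * |f' a| ^ s * |f' b| ^ (1 - s) with hKdef
  set u : ℝ → ℝ := fun t => Real.exp (Real.log a + t * L) with hu
  have hu0 : u 0 = a := by simp [hu, Real.exp_log ha0]
  have hu1 : u 1 = b := by simp [hu, hL, Real.exp_log hb0]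
  have huh : u (1/2) = Real.sqrt (a * b) := by
    rw [Real.sqrt_eq_rpow, Real.rpow_def_of_pos (by positivity), Real.log_mul ha0.ne' hb0.ne']
    simp only [hu, hL]; ring_nf
  have hmono : Monotone u := fun x y hxy =>
    Real.exp_le_exp.2 (by linarith [mul_le_mul_of_nonneg_right hxy hL0.le])
  have humem : ∀ t ∈ Icc (0:ℝ) 1, u t ∈ Icc a b := by
    intro t ht
    rw [← hu0, ← hu1]; exact ⟨hmono ht.1, hmono ht.2⟩
  have hud : ∀ t, HasDerivAt u (L * u t) t := by
    intro t
    have h : HasDerivAt u _ t := (((hasDerivAt_id t).mul_const L).const_add (Real.log a)).exp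
    exact h.congr_deriv (by simp [hu, mul_comm])
  have huc : Continuous u := continuous_iff_continuousAt.2 fun t => (hud t).continuousAt
  have hupos : ∀ t, 0 < u t := fun t => Real.exp_pos _
  have hrefl : ∀ t, a * b / u t = u (1 - t) := by
    intro t
    rw [div_eq_iff (hupos t).ne']
    simp only [hu]
    rw [← Real.exp_add]
    nth_rw 1 [← Real.exp_log ha0, ← Real.exp_log hb0]
    rw [← Real.exp_add, hL]; ring_nf
  have hfc : ContinuousOn f (Icc a b) := fun x hx => (hfab x hx).continuousAt.continuousWithinAt
  have hsub : ∫ x in a..b, (f x / x) * f (a * b / x) = L * ∫ t in (0:ℝ)..1, f (u t) * f (u (1 - t)) := by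
    have h := intervalIntegral.integral_comp_mul_deriv'' (a := 0) (b := 1) (f := u)
      (f' := fun t => L * u t) (g := fun x => (f x / x) * f (a * b / x)) huc.continuousOn
      (fun x _ => (hud x).hasDerivWithinAt) (by fun_prop) ?_
    · rw [hu0, hu1] at h
      rw [← h, ← intervalIntegral.integral_const_mul]
      congr 1; ext t
      have := (hupos t).ne'
      simp only [Function.comp, hrefl]
      field_simp
    · have hsubset : u '' uIcc 0 1 ⊆ Icc a b := by
        rw [uIcc_of_le zero_le_one]; rintro _ ⟨t, ht, rfl⟩; exact humem t ht
      refine ContinuousOn.mono ?_ hsubset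
      have hne : ∀ x ∈ Icc a b, x ≠ 0 := fun x hx => (ha0.trans_le hx.1).ne'
      refine (hfc.div continuousOn_id hne).mul (hfc.comp (continuousOn_const.div continuousOn_id hne) ?_)
      intro x hx
      have hx0 : 0 < x := ha0.trans_le hx.1
      constructor
      · change a ≤ a * b / x
        rw [le_div_iff₀ hx0]; exact mul_le_mul_of_nonneg_left hx.2 ha0.le
      · change a * b / x ≤ b
        rw [div_le_iff₀ hx0, mul_comm]; exact mul_le_mul_of_nonneg_left hx.1 hb0.le
  have hcore := core (fun t => f (u t)) (fun t => f' (u t) * (L * u t)) (L * K) M₁ M₂ ρ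
    (fun t ht => (hfab _ (humem t ht)).comp t (hud t))
    (fun t ht => hM₁.2 ⟨u t, ⟨by rw [← hu0]; exact hmono ht.1, by rw [← huh]; exact hmono ht.2⟩, rfl⟩)
    (fun t ht => hM₂.2 ⟨u t, ⟨by rw [← huh]; exact hmono ht.1, by rw [← hu1]; exact hmono ht.2⟩, rfl⟩)
    (by
      intro t ht
      have := pointwise_bound f' a b q s ha0 hab hq hs hconv hfa hfb hm t ht
      rw [abs_mul, abs_mul, abs_of_pos hL0, abs_of_pos (hupos t)]
      calc |f' (u t)| * (L * u t) = L * (u t * |f' (u t)|) := by ring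
        _ ≤ L * (K * Real.exp (ρ * t)) := mul_le_mul_of_nonneg_left this hL0.le
        _ = _ := by ring)
  simp only [huh] at hcore
  rw [hsub, ← mul_assoc, one_div_mul_cancel hL0.ne', one_mul]
  refine hcore.trans ?_
  have hM₁0 : 0 ≤ M₁ := by obtain ⟨x, _, rfl⟩ := hM₁.1; exact abs_nonneg _
  have hM₂0 : 0 ≤ M₂ := by obtain ⟨x, _, rfl⟩ := hM₂.1; exact abs_nonneg _
  have hK0 : 0 < K := by positivity
  have hϑ : (b * |f' b| ^ s / (a * |f' a| ^ s)) ^ (q / 2) = Real.exp (ρ * (q/2)) := by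
    rw [Real.rpow_def_of_pos (by positivity), Real.log_div (by positivity) (by positivity),
      Real.log_mul (by positivity) (by positivity), Real.log_mul (by positivity) (by positivity),
      Real.log_rpow hn, Real.log_rpow hm]
    simp only [hρ, hL]; ring_nf
  have hθ : (a * |f' a| ^ s / (b * |f' b| ^ s)) ^ (q / 2) = Real.exp (-ρ * (q/2)) := by
    rw [← inv_div, Real.inv_rpow (by positivity), hϑ, ← Real.exp_neg]; ring_nf
  have hKρ : K * Real.exp ρ = b * |f' b| := by
    have hprod : b * |f' b| = Real.exp (Real.log b + Real.log |f' b|) := by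
      rw [Real.exp_add, Real.exp_log hb0, Real.exp_log hn]
    have hKexp : K = Real.exp (Real.log a + Real.log |f' a| * s + Real.log |f' b| * (1 - s)) := by
      rw [Real.exp_add, Real.exp_add, Real.exp_log ha0, ← Real.rpow_def_of_pos hm,
        ← Real.rpow_def_of_pos hn]
    rw [hprod, hKexp, ← Real.exp_add, hρ, hL]
    ring_nf
  have hlog : Real.log (b / a) = L := Real.log_div hb0.ne' ha0.ne'
  have i1 := holder_bound (-ρ) q hq
  have i2 := holder_bound ρ q hq
  rw [hϑ, hθ, hlog, ← hKρ]
  calc _ ≤ 2 * (M₁ * (L * K * Real.exp ρ) * (1/4 * ((q-1)/(2*q-1)) ^ (1-1/q) *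
          (h₃ (Real.exp (-ρ * (q/2)))) ^ (1/q)) +
        M₂ * (L * K) * (1/4 * ((q-1)/(2*q-1)) ^ (1-1/q) * (h₃ (Real.exp (ρ * (q/2)))) ^ (1/q))) := by
        gcongr
    _ = _ := by ring
end
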